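/- Let G be a finite connected multigraph and D a divisor on G. Then D is big (i.e. vol(D) > 0) if and only if deg(D) > 0. -/

import Mathlib

/-!
Linear equivalence preserves degree, so `r(D) ≤ max (deg D) (-1)`; hence `deg D ≤ 0` forces
`vol D ≤ 0`.

Conversely, on a connected graph every divisor of sufficiently large degree is equivalent to an
effective one (`exists_bound_linSys_nonempty`). The reason is that `[u] - [w]` is torsion modulo
principal divisors: by the maximum principle a rational linear functional that kills all
chip-firing divisors is constant on vertices (`harmonic_const`), so it kills `[u] - [w]`, and by
duality `[u] - [w]` lies in the rational span of the chip-firing divisors; clearing denominators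
gives an integral relation. Using these relations, all coefficients are reduced to bounded
nonnegative ones, at the expense of a single base vertex, whose coefficient is nonnegative once the
degree is large. If `C` bounds the degree needed, then `r(D) ≥ deg D - C` whenever `deg D ≥ C`, and
so `r(ℓD)/ℓ ≥ deg D - C/ℓ ≥ 1/2` for large `ℓ` when `deg D > 0`.
-/

open Filter

/-- The degree of a divisor on a finite vertex set. -/
def divDeg {V : Type*} [Fintype V] (D : V → ℤ) : ℤ := ∑ v, D v

/-- A divisor is effective if all its coefficients are nonnegative. -/
def divEffective {V : Type*} (D : V → ℤ) : Prop := ∀ v, 0 ≤ D v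

/-- A finite multigraph: a symmetric edge-multiplicity function on a finite
vertex set, where `m v v` counts the loops at `v`. -/
structure Multigraph (V : Type*) [Fintype V] where
  m : V → V → ℕ
  symm : ∀ u v, m u v = m v u

namespace Multigraph

variable {V : Type*} [Fintype V] [DecidableEq V] (G : Multigraph V)

/-- Connectedness of the simple graph having an edge between distinct `u, v`
whenever `m u v > 0`. -/
def Connected : Prop :=
  (SimpleGraph.fromRel fun u v => 0 < G.m u v).Connected

/-- The valence of a vertex: each loop counts twice. -/
def val (v : V) : ℕ := 2 * G.m v v + ∑ u ∈ Finset.univ.erase v, G.m v u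

/-- The chip-firing divisor of a vertex `v`. -/
def chip (v : V) : V → ℤ := fun u =>
  if u = v then -(∑ w ∈ Finset.univ.erase v, (G.m v w : ℤ)) else (G.m v u : ℤ)

/-- The subgroup of principal divisors, generated by chip-firing divisors. -/
def prin : AddSubgroup (V → ℤ) := AddSubgroup.closure (Set.range G.chip)

/-- Linear equivalence of divisors. -/
def LinEquiv (D D' : V → ℤ) : Prop := D - D' ∈ G.prin

/-- The complete linear series of `D`: effective divisors linearly equivalent to `D`. -/
def linSys (D : V → ℤ) : Set (V → ℤ) := {E | divEffective E ∧ G.LinEquiv E D}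

open scoped Classical in
/-- The Baker–Norine rank: `-1` if `|D|` is empty, and otherwise the largest
`d ≥ 0` such that `|D - E|` is nonempty for every effective divisor `E` of
degree `d`. -/
noncomputable def rank (D : V → ℤ) : ℤ :=
  if (G.linSys D).Nonempty then
    sSup {d : ℤ | 0 ≤ d ∧ ∀ E : V → ℤ, divEffective E → divDeg E = d →
      (G.linSys (D - E)).Nonempty}
  else -1

/-- The number of edges of the multigraph. -/
def numEdges : ℕ :=
  (∑ v, G.m v v) + (∑ v, ∑ u ∈ Finset.univ.erase v, G.m v u) / 2

/-- The tropical volume of a divisor: `limsup_{ℓ → ∞} r(ℓ D)/ℓ`. -/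
noncomputable def vol (D : V → ℤ) : ℝ :=
  Filter.limsup (fun ℓ : ℕ => (G.rank (fun v => (ℓ : ℤ) * D v) : ℝ) / ℓ) Filter.atTop

end Multigraph

namespace Multigraph

variable {V : Type*} [Fintype V] [DecidableEq V] (G : Multigraph V)

/-! ### Degrees of principal divisors -/

/-- The pairing of a chip-firing divisor with `f` is the weighted Laplacian of `f`. -/
theorem sum_chip_mul (f : V → ℚ) (v : V) :
    ∑ u, (G.chip v u : ℚ) * f u = ∑ u ∈ Finset.univ.erase v, (G.m v u : ℚ) * (f u - f v) := by
  rw [← Finset.add_sum_erase _ _ (Finset.mem_univ v)]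
  have h : ∑ u ∈ Finset.univ.erase v, (G.chip v u : ℚ) * f u
      = ∑ u ∈ Finset.univ.erase v, (G.m v u : ℚ) * f u := by
    refine Finset.sum_congr rfl fun u hu => ?_
    simp [chip, Finset.ne_of_mem_erase hu]
  rw [h]
  simp only [chip, if_true, mul_sub, Finset.sum_sub_distrib, ← Finset.sum_mul]
  push_cast
  ring

theorem deg_chip (v : V) : divDeg (G.chip v) = 0 := by
  have h := G.sum_chip_mul (fun _ => 1) v
  simp only [mul_one, sub_self, mul_zero, Finset.sum_const_zero] at h
  unfold divDeg
  exact_mod_cast h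

theorem deg_sub (D E : V → ℤ) : divDeg (D - E) = divDeg D - divDeg E := by
  simp [divDeg]

theorem deg_prin {P : V → ℤ} (hP : P ∈ G.prin) : divDeg P = 0 := by
  unfold prin at hP
  induction hP using AddSubgroup.closure_induction with
  | mem x hx => obtain ⟨v, rfl⟩ := hx; exact G.deg_chip v
  | zero => simp [divDeg]
  | add x y _ _ hx hy =>
    have : divDeg (x + y) = divDeg x + divDeg y := by simp [divDeg, Finset.sum_add_distrib]
    omega
  | neg x _ hx =>
    have : divDeg (-x) = - divDeg x := by simp [divDeg]
    omega

theorem deg_nonneg_of_linSys {D : V → ℤ} (h : (G.linSys D).Nonempty) : 0 ≤ divDeg D := by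
  obtain ⟨E, hE, hED⟩ := h
  have h1 := G.deg_prin hED
  rw [deg_sub] at h1
  have h2 : 0 ≤ divDeg E := Finset.sum_nonneg fun v _ => hE v
  omega

/-! ### Torsion of differences of vertices -/

/-- Maximum principle: a rational function annihilated by the Laplacian of a connected multigraph
is constant. -/
theorem harmonic_const (hG : G.Connected) (f : V → ℚ)
    (hf : ∀ v, ∑ u, (G.chip v u : ℚ) * f u = 0) (u w : V) : f u = f w := by
  have hne : Nonempty V := ⟨u⟩
  obtain ⟨x, hx⟩ := Finite.exists_max f
  have step : ∀ v t : V, f v = f x →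
      (SimpleGraph.fromRel fun u v => 0 < G.m u v).Adj v t → f t = f x := by
    intro v t hv hvt
    rw [SimpleGraph.fromRel_adj] at hvt
    obtain ⟨hvt, hm⟩ := hvt
    have hm : 0 < G.m v t := by
      rcases hm with h | h
      · exact h
      · rw [G.symm]; exact h
    have h0 := hf v
    rw [sum_chip_mul, Finset.sum_eq_zero_iff_of_nonpos] at h0
    · have := h0 t (by simp [hvt.symm])
      rcases mul_eq_zero.mp this with h | h
      · norm_cast at h; omega
      · linarith
    · intro s _
      have := hx s
      exact mul_nonpos_of_nonneg_of_nonpos (by positivity) (by linarith)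
  have all : ∀ t, f t = f x := by
    intro t
    obtain ⟨p⟩ := hG.preconnected x t
    have walk : ∀ a b : V, (SimpleGraph.fromRel fun u v => 0 < G.m u v).Walk a b →
        f a = f x → f b = f x := by
      intro a b p
      induction p with
      | nil => exact id
      | cons h _ ih => exact fun ha => ih (step _ _ ha h)
    exact walk x t p rfl
  rw [all u, all w]

/-- Clearing denominators in a rational combination of chip-firing divisors. -/
theorem exists_mul_mem_prin {x : V → ℚ}
    (hx : x ∈ Submodule.span ℚ (Set.range fun v u => (G.chip v u : ℚ))) :
    ∃ N : ℕ, 0 < N ∧ ∃ P ∈ G.prin, ∀ u, (N : ℚ) * x u = (P u : ℚ) := by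
  induction hx using Submodule.span_induction with
  | mem x hx =>
    obtain ⟨v, rfl⟩ := hx
    exact ⟨1, one_pos, G.chip v, AddSubgroup.subset_closure ⟨v, rfl⟩, by simp⟩
  | zero => exact ⟨1, one_pos, 0, zero_mem _, by simp⟩
  | add x y _ _ hx hy =>
    obtain ⟨N, hN, P, hP, h⟩ := hx
    obtain ⟨M, hM, Q, hQ, k⟩ := hy
    refine ⟨N * M, by positivity, (M : ℤ) • P + (N : ℤ) • Q,
      add_mem (zsmul_mem hP _) (zsmul_mem hQ _), fun u => ?_⟩
    simp only [Pi.add_apply, Pi.smul_apply, smul_eq_mul]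
    push_cast
    rw [← h, ← k]
    ring
  | smul q x _ hx =>
    obtain ⟨N, hN, P, hP, h⟩ := hx
    refine ⟨q.den * N, Nat.mul_pos q.den_pos hN, q.num • P, zsmul_mem hP _, fun u => ?_⟩
    simp only [Pi.smul_apply, smul_eq_mul]
    push_cast
    rw [← h, ← Rat.den_mul_eq_num q]
    ring

/-- On a connected multigraph, `[u] - [w]` is torsion modulo principal divisors. -/
theorem torsion (hG : G.Connected) (u w : V) :
    ∃ N : ℕ, 0 < N ∧ (N : ℤ) • (Pi.single u 1 - Pi.single w 1 : V → ℤ) ∈ G.prin := by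
  have hmem : (Pi.single u 1 - Pi.single w 1 : V → ℚ) ∈
      Submodule.span ℚ (Set.range fun v u => (G.chip v u : ℚ)) := by
    by_contra hn
    obtain ⟨φ, hφ, hker⟩ := Submodule.exists_le_ker_of_notMem hn
    apply hφ
    rw [map_sub, sub_eq_zero]
    refine G.harmonic_const hG (fun v => φ (Pi.single v 1)) (fun v => ?_) u w
    have h0 : φ (fun u => (G.chip v u : ℚ)) = 0 := hker (Submodule.subset_span ⟨v, rfl⟩)
    rw [LinearMap.pi_apply_eq_sum_univ] at h0
    rw [← h0]
    refine Finset.sum_congr rfl fun t _ => ?_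
    rw [smul_eq_mul]
    congr 2
    ext s
    simp [Pi.single_apply, eq_comm]
  obtain ⟨N, hN, P, hP, h⟩ := G.exists_mul_mem_prin hmem
  refine ⟨N, hN, ?_⟩
  convert hP using 1
  ext s
  have := h s
  simp only [Pi.sub_apply, Pi.single_apply] at this
  simp only [Pi.smul_apply, Pi.sub_apply, Pi.single_apply, smul_eq_mul]
  exact_mod_cast this

/-! ### Effectivity in large degree -/

/-- On a connected multigraph, every divisor of sufficiently large degree is equivalent to an
effective divisor. -/
theorem exists_bound_linSys_nonempty (hG : G.Connected) :
    ∃ C : ℤ, ∀ D : V → ℤ, C ≤ divDeg D → (G.linSys D).Nonempty := by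
  obtain ⟨w⟩ := hG.nonempty
  choose N hN hmem using fun u => G.torsion hG u w
  refine ⟨∑ v, (N v : ℤ), fun D hD => ?_⟩
  have hN' : ∀ v, (0 : ℤ) < N v := fun v => by exact_mod_cast hN v
  -- Reduce each coefficient modulo `N v`; the chips removed are all moved to `w`.
  refine ⟨D - ∑ v, (D v / N v) • ((N v : ℤ) • (Pi.single v 1 - Pi.single w 1 : V → ℤ)), ?_, ?_⟩
  · have key : ∀ s, (D - ∑ v, (D v / N v) •
        ((N v : ℤ) • (Pi.single v 1 - Pi.single w 1 : V → ℤ))) s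
        = D s % N s + if s = w then ∑ v, D v / N v * N v else 0 := by
      intro s
      simp only [Pi.sub_apply, Finset.sum_apply, Pi.smul_apply, smul_eq_mul, mul_sub,
        Finset.sum_sub_distrib, Pi.single_apply]
      have h := Int.emod_add_mul_ediv (D s) (N s)
      by_cases hs : s = w <;> simp [hs] <;> subst_vars <;> linarith
    intro s
    rw [key]
    have h1 : 0 ≤ D s % N s := Int.emod_nonneg _ (hN' s).ne'
    have h2 : 0 ≤ ∑ v, D v / N v * N v := by
      have : ∑ v, (D v - N v) ≤ ∑ v, D v / N v * N v := by
        refine Finset.sum_le_sum fun v _ => ?_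
        have h := Int.emod_add_mul_ediv (D v) (N v)
        have h' := Int.emod_lt_of_pos (D v) (hN' v)
        linarith
      rw [Finset.sum_sub_distrib] at this
      unfold divDeg at hD
      linarith
    split_ifs <;> linarith
  · unfold LinEquiv
    rw [sub_sub_cancel_left]
    exact neg_mem (sum_mem fun v _ => zsmul_mem (hmem v) _)

/-! ### Bounds on the rank -/

/-- The defining set of the rank is bounded by the degree. -/
theorem le_deg_of_mem (w : V) (D : V → ℤ) {d : ℤ}
    (hd : d ∈ {d : ℤ | 0 ≤ d ∧ ∀ E : V → ℤ, divEffective E → divDeg E = d →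
      (G.linSys (D - E)).Nonempty}) : d ≤ divDeg D := by
  obtain ⟨h0, h⟩ := hd
  have hdeg : divDeg (Pi.single w d : V → ℤ) = d := by simp [divDeg]
  have := G.deg_nonneg_of_linSys (h (Pi.single w d) (fun v => by
    rw [Pi.single_apply]; split_ifs <;> omega) hdeg)
  rw [deg_sub] at this
  omega

theorem zero_mem_rankSet {D : V → ℤ} (h : (G.linSys D).Nonempty) :
    (0 : ℤ) ∈ {d : ℤ | 0 ≤ d ∧ ∀ E : V → ℤ, divEffective E → divDeg E = d →
      (G.linSys (D - E)).Nonempty} := by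
  refine ⟨le_rfl, fun E hE hE0 => ?_⟩
  have : E = 0 := by
    ext v
    exact (Finset.sum_eq_zero_iff_of_nonneg fun v _ => hE v).mp hE0 v (Finset.mem_univ v)
  simpa [this] using h

theorem rank_le (w : V) (D : V → ℤ) : G.rank D ≤ max (divDeg D) (-1) := by
  unfold rank
  split_ifs with h
  · exact le_max_of_le_left (csSup_le ⟨0, G.zero_mem_rankSet h⟩ fun d hd => G.le_deg_of_mem w D hd)
  · exact le_max_right _ _

theorem neg_one_le_rank (w : V) (D : V → ℤ) : -1 ≤ G.rank D := by
  unfold rank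
  split_ifs with h
  · have := le_csSup ⟨divDeg D, fun d hd => G.le_deg_of_mem w D hd⟩ (G.zero_mem_rankSet h)
    omega
  · exact le_rfl

theorem deg_sub_le_rank (w : V) {C : ℤ}
    (hC : ∀ D : V → ℤ, C ≤ divDeg D → (G.linSys D).Nonempty)
    (D : V → ℤ) (hD : C ≤ divDeg D) : divDeg D - C ≤ G.rank D := by
  unfold rank
  rw [if_pos (hC D hD)]
  refine le_csSup ⟨divDeg D, fun d hd => G.le_deg_of_mem w D hd⟩
    ⟨by omega, fun E _ hE => hC _ ?_⟩
  rw [deg_sub]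
  omega

end Multigraph

/-- A divisor is big (has positive tropical volume) iff its degree is positive. -/
theorem big_iff_deg_pos {V : Type*} [Fintype V] [DecidableEq V]
    (G : Multigraph V) (hG : G.Connected) (D : V → ℤ) :
    0 < G.vol D ↔ 0 < divDeg D := by
  obtain ⟨w⟩ := hG.nonempty
  have hdeg : ∀ ℓ : ℕ, divDeg (fun v => (ℓ : ℤ) * D v) = ℓ * divDeg D := fun ℓ => by
    simp [divDeg, Finset.mul_sum]
  have hlow : ∀ ℓ : ℕ, (-1 : ℝ) ≤ (G.rank (fun v => (ℓ : ℤ) * D v) : ℝ) / ℓ := by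
    intro ℓ
    rcases Nat.eq_zero_or_pos ℓ with rfl | h
    -- At `ℓ = 0` the quotient has the junk value `0`.
    · norm_num
    · have h1 : (1 : ℝ) ≤ ℓ := by exact_mod_cast h
      have h2 : (-1 : ℝ) ≤ (G.rank (fun v => (ℓ : ℤ) * D v) : ℝ) := by
        exact_mod_cast G.neg_one_le_rank w _
      rw [le_div_iff₀ (by linarith)]
      linarith
  have hup : ∀ ℓ : ℕ, (G.rank (fun v => (ℓ : ℤ) * D v) : ℝ) / ℓ ≤ max (divDeg D : ℝ) 0 := by
    intro ℓ
    have h := G.rank_le w (fun v => (ℓ : ℤ) * D v)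
    rw [hdeg] at h
    have h' : (G.rank (fun v => (ℓ : ℤ) * D v) : ℝ) ≤ max (ℓ * divDeg D : ℝ) (-1) := by
      exact_mod_cast h
    refine div_le_of_le_mul₀ (by positivity) (le_max_right _ _) (h'.trans (max_le ?_ ?_))
    · rw [mul_comm]
      exact mul_le_mul_of_nonneg_right (le_max_left _ _) (by positivity)
    · have : (0 : ℝ) ≤ max (divDeg D : ℝ) 0 * ℓ := mul_nonneg (le_max_right _ _) (by positivity)
      linarith
  constructor
  · intro hv
    by_contra hD
    have hD' : (divDeg D : ℝ) ≤ 0 := by exact_mod_cast not_lt.mp hD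
    refine absurd hv (not_lt.mpr ?_)
    refine limsup_le_of_le ?_ (Eventually.of_forall fun ℓ => (hup ℓ).trans (max_le hD' le_rfl))
    exact isCoboundedUnder_le_of_le atTop hlow
  · intro hD
    obtain ⟨C₀, hC₀⟩ := G.exists_bound_linSys_nonempty hG
    obtain ⟨C, hC0, hC⟩ : ∃ C : ℤ, 0 ≤ C ∧ ∀ D : V → ℤ, C ≤ divDeg D → (G.linSys D).Nonempty :=
      ⟨max C₀ 0, le_max_right _ _, fun D h => hC₀ D ((le_max_left _ _).trans h)⟩
    have hev : ∀ᶠ ℓ : ℕ in atTop,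
        (1 / 2 : ℝ) ≤ (G.rank (fun v => (ℓ : ℤ) * D v) : ℝ) / ℓ := by
      filter_upwards [eventually_ge_atTop (2 * C.toNat + 1)] with ℓ hℓ
      have hℓ' : 2 * C + 1 ≤ (ℓ : ℤ) := by omega
      have hmul : (ℓ : ℤ) ≤ ℓ * divDeg D := le_mul_of_one_le_right (by omega) hD
      have h := G.deg_sub_le_rank w hC (fun v => (ℓ : ℤ) * D v) (by rw [hdeg]; omega)
      rw [hdeg] at h
      have h2 : (ℓ : ℤ) ≤ 2 * G.rank (fun v => (ℓ : ℤ) * D v) := by omega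
      have h3 : (ℓ : ℝ) ≤ 2 * (G.rank (fun v => (ℓ : ℤ) * D v) : ℝ) := by exact_mod_cast h2
      have h4 : (0 : ℝ) < ℓ := by exact_mod_cast (by omega : 0 < ℓ)
      rw [le_div_iff₀ h4]
      linarith
    have : (1 / 2 : ℝ) ≤ G.vol D :=
      le_limsup_of_frequently_le hev.frequently (isBoundedUnder_of ⟨_, hup⟩)
    linarith
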